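/- Let Z ∈ ℝ^{d×m}, and let Π ∈ ℝ^{m×k} have nonnegative entries, rows each summing to one, and every column sum ⟨1, Π_j⟩ > 0. Set α = d/(m·ε²), α_j = d/(⟨1, Π_j⟩·ε²) and γ_j = ⟨1, Π_j⟩/m for a fixed ε > 0. Let Γ ∈ ℝ^{d×q} have unit ℓ₂-norm columns and let A ∈ ℝ^{q×k} have nonnegative entries, such that Γ·Diag(A_j)·Γᵀ = Z·Diag(Π_j)·Zᵀ for every j = 1, …, k. Then (1/2)·log det(I + α·Σ_{j=1}^{k} Γ·Diag(A_j)·Γᵀ) − Σ_{j=1}^{k} (γ_j/2)·Σ_{l=1}^{q} log(1 + α_j·A_{l,j}) ≤ (1/2)·log det(I + α·Z·Zᵀ) − Σ_{j=1}^{k} (γ_j/2)·log det(I + α_j·Z·Diag(Π_j)·Zᵀ). -/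

import Mathlib

open Matrix BigOperators

/-!
The rows of `P` sum to one, so adding the constraints over `j` gives `∑ j, Γ Diag(A_j) Γᵀ = Z Zᵀ`
and the two leading terms agree. What remains is, for each `j`, the bound
`det (I + Γ Diag(a) Γᵀ) ≤ ∏ l, (1 + a l)` for `a ≥ 0` and unit columns. With `B = Γ Diag(√a)`
the left side is `det (I + B Bᵀ) = det (I + Bᵀ B)`, and the right side is the product of the
diagonal entries of `I + Bᵀ B`, so the bound is Hadamard's inequality. The latter follows from
AM-GM for the eigenvalues, after rescaling to unit diagonal.
-/

section Hadamard

open scoped ComplexOrder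

variable {𝕜 n m : Type*} [RCLike 𝕜] [Fintype m] [DecidableEq m] [Fintype n]

lemma det_le_one_of_trace_le_card [DecidableEq n] {A : Matrix n n 𝕜}
    (hA : A.PosSemidef) (htrace : A.trace ≤ Fintype.card n) : A.det ≤ 1 := by
  have hsum : ∑ i, hA.isHermitian.eigenvalues i ≤ Fintype.card n := by
    exact_mod_cast hA.isHermitian.trace_eq_sum_eigenvalues.symm.trans_le htrace
  -- AM-GM, in the form `x ≤ exp (x - 1)` for each eigenvalue.
  have hprod : ∏ i, hA.isHermitian.eigenvalues i ≤ 1 := calc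
    _ ≤ ∏ i, Real.exp (hA.isHermitian.eigenvalues i - 1) :=
      Finset.prod_le_prod (fun i _ => hA.eigenvalues_nonneg i) fun i _ => by
        linarith [Real.add_one_le_exp (hA.isHermitian.eigenvalues i - 1)]
    _ ≤ 1 := by
      rw [← Real.exp_sum, Real.exp_le_one_iff, Finset.sum_sub_distrib]
      simpa using hsum
  rw [hA.isHermitian.det_eq_prod_eigenvalues]
  exact_mod_cast hprod

lemma det_le_prod_diag_of_posDef [DecidableEq n] {A : Matrix n n 𝕜} (hA : A.PosDef) :
    A.det ≤ ∏ i, A i i := by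
  have hscale (i : n) : ∃ r : ℝ, (r : 𝕜) * A i i * r = 1 := by
    obtain ⟨x, hx, hxA⟩ := RCLike.pos_iff_exists_ofReal.mp (hA.diag_pos (i := i))
    refine ⟨(√x)⁻¹, ?_⟩
    rw [← hxA]
    norm_cast
    field_simp
    exact (Real.sq_sqrt hx.le).symm
  choose r hr using hscale
  set S : Matrix n n 𝕜 := diagonal fun i => (r i : 𝕜) with hS
  have hSH : Sᴴ = S := by simp [hS, diagonal_conjTranspose, Pi.star_def]
  have hdiag_one (i : n) : (S * A * S) i i = 1 := by
    rw [hS, mul_diagonal, diagonal_mul, hr]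
  have hscaled : (S * A * S).det ≤ 1 := by
    refine det_le_one_of_trace_le_card ?_ ?_
    · simpa only [hSH] using hA.posSemidef.mul_mul_conjTranspose_same S
    · simp [trace, hdiag_one]
  have hdet : (S * A * S).det * ∏ i, A i i = A.det := by
    have hprod : S.det * (∏ i, A i i) * S.det = 1 := by
      simp only [hS, det_diagonal, ← Finset.prod_mul_distrib, hr, Finset.prod_const_one]
    rw [det_mul, det_mul]
    linear_combination A.det * hprod
  rw [← hdet]
  exact mul_le_of_le_one_left (Finset.prod_nonneg fun i _ => hA.diag_pos.le) hscaled

lemma det_le_prod_diag_of_posSemidef [DecidableEq n] {A : Matrix n n 𝕜} (hA : A.PosSemidef) :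
    A.det ≤ ∏ i, A i i := by
  by_cases hdet : A.det = 0
  · exact hdet ▸ Finset.prod_nonneg fun i _ => hA.diag_nonneg
  · exact det_le_prod_diag_of_posDef (hA.posDef_iff_det_ne_zero.mpr hdet)

lemma det_one_add_mul_conjTranspose_le_prod (B : Matrix m n 𝕜) :
    (1 + B * Bᴴ).det ≤ ∏ j, (1 + (Bᴴ * B) j j) := by
  classical
  rw [det_one_add_mul_comm]
  simpa only [Matrix.add_apply, one_apply_eq] using
    det_le_prod_diag_of_posSemidef (PosSemidef.one.add (posSemidef_conjTranspose_mul_self B))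

end Hadamard

section WeightedGram

variable {n ι : Type*} [Fintype n] [DecidableEq n] [Fintype ι] [DecidableEq ι]

lemma det_one_add_mul_diagonal_mul_transpose_pos (G : Matrix n ι ℝ) {a : ι → ℝ} (ha : 0 ≤ a) :
    0 < (1 + G * diagonal a * Gᵀ).det :=
  (PosDef.one.add_posSemidef ((PosSemidef.diagonal ha).mul_mul_conjTranspose_same G)).det_pos

lemma det_one_add_mul_diagonal_mul_transpose_le_prod (G : Matrix n ι ℝ) {a : ι → ℝ}
    (ha : 0 ≤ a) :
    (1 + G * diagonal a * Gᵀ).det ≤ ∏ l, (1 + a l * ∑ i, G i l ^ 2) := by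
  set B := G * diagonal fun l => √(a l) with hB
  have hBB : B * Bᴴ = G * diagonal a * Gᵀ := by
    have hsqrt : diagonal (fun l => √(a l)) * diagonal (fun l => √(a l)) = diagonal a := by
      simp only [diagonal_mul_diagonal, Real.mul_self_sqrt (ha _)]
    rw [hB, conjTranspose_eq_transpose_of_trivial, transpose_mul, diagonal_transpose, ← hsqrt]
    simp only [Matrix.mul_assoc]
  have hdiag (l : ι) : (Bᴴ * B) l l = a l * ∑ i, G i l ^ 2 := by
    simp only [mul_apply, conjTranspose_apply, star_trivial, Finset.mul_sum]
    refine Finset.sum_congr rfl fun i _ => ?_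
    rw [hB, mul_diagonal]
    linear_combination G i l ^ 2 * Real.mul_self_sqrt (ha l)
  simpa only [hBB, hdiag] using det_one_add_mul_conjTranspose_le_prod B

lemma log_det_one_add_mul_diagonal_mul_transpose_le_sum (G : Matrix n ι ℝ)
    (hG : ∀ l, ∑ i, G i l ^ 2 ≤ 1) {a : ι → ℝ} (ha : 0 ≤ a) :
    Real.log (1 + G * diagonal a * Gᵀ).det ≤ ∑ l, Real.log (1 + a l) := by
  have hpos (l : ι) : 0 < 1 + a l := add_pos_of_pos_of_nonneg one_pos (ha l)
  rw [← Real.log_prod fun l _ => (hpos l).ne']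
  refine Real.log_le_log (det_one_add_mul_diagonal_mul_transpose_pos G ha) ?_
  refine (det_one_add_mul_diagonal_mul_transpose_le_prod G ha).trans ?_
  refine Finset.prod_le_prod (fun l _ => ?_) fun l _ => ?_
  · have hal : 0 ≤ a l := ha l
    positivity
  · gcongr
    exact mul_le_of_le_one_right (ha l) (hG l)

end WeightedGram

lemma sum_mul_diagonal_mul_of_row_sum_eq_one {R l m n κ : Type*} [NonAssocSemiring R] [Fintype m]
    [DecidableEq m] [Fintype κ] (X : Matrix l m R) {P : Matrix m κ R} (hP : ∀ i, ∑ j, P i j = 1)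
    (Y : Matrix m n R) : ∑ j, X * diagonal (fun i => P i j) * Y = X * Y := by
  have hdiag : ∑ j, diagonal (fun i => P i j) = (1 : Matrix m m R) := by
    rw [← diagonal_one]
    refine (map_sum (diagonalAddMonoidHom m R) _ _).symm.trans (congrArg diagonal ?_)
    ext i
    rw [Finset.sum_apply, hP]
  rw [← Matrix.sum_mul, ← Matrix.mul_sum, hdiag, Matrix.mul_one]

theorem variational_le_mcr2_general {n ι κ μ : Type*} [Fintype n] [DecidableEq n] [Fintype ι]
    [DecidableEq ι] [Fintype κ] [Fintype μ] [DecidableEq μ] (Z : Matrix n μ ℝ)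
    {P : Matrix μ κ ℝ} (hrow : ∀ i, ∑ j, P i j = 1)
    (Γ : Matrix n ι ℝ) (hΓ : ∀ l, ∑ i, Γ i l ^ 2 ≤ 1)
    {A : Matrix ι κ ℝ} (hA : ∀ l j, 0 ≤ A l j)
    (hconstr : ∀ j, Γ * diagonal (fun l => A l j) * Γᵀ = Z * diagonal (fun i => P i j) * Zᵀ)
    (α : ℝ) {β w : κ → ℝ} (hβ : 0 ≤ β) (hw : 0 ≤ w) :
    (1 / 2) * Real.log (1 + α • ∑ j, Γ * diagonal (fun l => A l j) * Γᵀ).det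
      - ∑ j, w j * ∑ l, Real.log (1 + β j * A l j)
    ≤ (1 / 2) * Real.log (1 + α • (Z * Zᵀ)).det
      - ∑ j, w j * Real.log (1 + β j • (Z * diagonal (fun i => P i j) * Zᵀ)).det := by
  have hleading : ∑ j, Γ * diagonal (fun l => A l j) * Γᵀ = Z * Zᵀ := by
    simp only [hconstr, sum_mul_diagonal_mul_of_row_sum_eq_one Z hrow]
  have hscale (j : κ) : β j • (Z * diagonal (fun i => P i j) * Zᵀ)
      = Γ * diagonal (fun l => β j * A l j) * Γᵀ := by
    rw [← hconstr, ← Matrix.smul_mul, ← Matrix.mul_smul, ← diagonal_smul]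
    rfl
  rw [hleading]
  gcongr with j
  · exact hw j
  · rw [hscale]
    exact log_det_one_add_mul_diagonal_mul_transpose_le_sum Γ hΓ fun l => mul_nonneg (hβ j) (hA l j)

/-- The variational objective lower-bounds the MCR² objective under the exact
dictionary constraints.  With `α = d/(m ε²)`, `α_j = d/(⟨1,Π_j⟩ ε²)`, `γ_j = ⟨1,Π_j⟩/m`,
if `Γ` has unit-norm columns, `A ≥ 0`, and `Γ Diag(A_j) Γᵀ = Z Diag(Π_j) Zᵀ` for all `j`, then
`½ log det(I + α ∑_j Γ Diag(A_j) Γᵀ) − ∑_j (γ_j/2) ∑_l log(1 + α_j A_{l,j})`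
`≤ ½ log det(I + α Z Zᵀ) − ∑_j (γ_j/2) log det(I + α_j Z Diag(Π_j) Zᵀ)`. -/
theorem variational_le_mcr2 (d m k q : ℕ) (Z : Matrix (Fin d) (Fin m) ℝ)
    (P : Matrix (Fin m) (Fin k) ℝ) (hP : ∀ i j, 0 ≤ P i j)
    (hrow : ∀ i, ∑ j, P i j = 1) (hcol : ∀ j, 0 < ∑ i, P i j)
    (ε : ℝ) (hε : 0 < ε)
    (Γ : Matrix (Fin d) (Fin q) ℝ) (hΓ : ∀ l, ∑ i, (Γ i l) ^ 2 = 1)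
    (A : Matrix (Fin q) (Fin k) ℝ) (hA : ∀ l j, 0 ≤ A l j)
    (hconstr : ∀ j, Γ * Matrix.diagonal (fun l => A l j) * Γᵀ =
        Z * Matrix.diagonal (fun i => P i j) * Zᵀ) :
    (1 / 2) * Real.log
        ((1 + ((d : ℝ) / (m * ε ^ 2)) •
          ∑ j : Fin k, Γ * Matrix.diagonal (fun l => A l j) * Γᵀ).det)
      - ∑ j : Fin k, ((∑ i, P i j) / m) / 2 *
          ∑ l : Fin q, Real.log (1 + ((d : ℝ) / ((∑ i, P i j) * ε ^ 2)) * A l j)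
    ≤ (1 / 2) * Real.log ((1 + ((d : ℝ) / (m * ε ^ 2)) • (Z * Zᵀ)).det)
      - ∑ j : Fin k, ((∑ i, P i j) / m) / 2 *
          Real.log ((1 + ((d : ℝ) / ((∑ i, P i j) * ε ^ 2)) •
            (Z * Matrix.diagonal (fun i => P i j) * Zᵀ)).det) := by
  exact variational_le_mcr2_general Z hrow Γ (fun l => (hΓ l).le) hA hconstr _
    (fun j => have := hcol j; by positivity) (fun j => have := hcol j; by positivity)
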